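/- For computable probabilities P and Q on (Ω,B), if R^P ⊆ R^Q then P is absolutely continuous with respect to Q (i.e., Q(C) = 0 implies P(C) = 0 for every measurable C). -/

import Mathlib

/-!
Suppose `Q C = 0` but `P C > 1 / D` for some `D`. By outer regularity of `Q`, and since every open
set is an increasing union of clopen sets given by finitely many strings of equal length, for each
`N` there is a finite list `L` of strings with `Q(⋃ cyl x) < 1 / N` and `P(⋃ cyl x) > 1 / D`. Both
inequalities can be recognised from sufficiently good rational approximations of `P` and `Q` on
cylinders, so such lists can be found by an unbounded search: there is a computable `V : ℕ → List S`
with `Q(cylUnion (V N)) < 1 / N` and `P(cylUnion (V N)) ≥ 1 / D` (`exists_computable_lists`).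

Let `U n` be the union of the strings in `V (2 ^ (m + 2))` over `m ≥ n`. Since
`∑_{m ≥ n} 2 ^ (-(m + 2)) < 2 ^ (-n)`, this is a Martin-Löf test for `Q` (`isMLTest_tailTest`), so
its limit contains no `Q`-random sequence. The limit is a decreasing intersection of sets of
`P`-measure at least `1 / D`, hence has positive `P`-measure, while `P`-almost every sequence is
`P`-random because there are only countably many tests (`ae_mlRandom`). So the limit contains a
`P`-random sequence, which is not `Q`-random.

The approximations of `P` and `Q` are rational-valued, and computability over `ℚ` refers to its
`Denumerable` instance, which numbers the rationals by the rank of their code among all codes of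
reduced fractions. The numerator and denominator are recovered by searching for the code of given
rank (`computable_ratCode`). Afterwards only natural-number arithmetic is used: each probability is
replaced by natural numbers `a (x, k)` with `|P(x) (k + 1) - a (x, k)| ≤ 2`.
-/

open MeasureTheory Filter Set
open scoped ENNReal NNReal

namespace AlgRand

/-- `S` : finite binary strings. -/
abbrev S : Type := List Bool

/-- `Seq` : infinite binary sequences (the space Ω). -/
abbrev Seq : Type := ℕ → Bool

/-- A finite string is a prefix of an infinite sequence. -/
def PrefixSeq (x : S) (ω : Seq) : Prop := ∀ i : Fin x.length, x.get i = ω i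

/-- The first `n` bits of an infinite sequence. -/
def seqTake (ω : Seq) (n : ℕ) : S := List.ofFn fun i : Fin n => ω i

/-- Cylinder set Δ(x) ⊆ Ω. -/
def cyl (x : S) : Set Seq := {ω | PrefixSeq x ω}

/-- Product cylinder Δ(x,y) ⊆ Ω². -/
def cyl2 (xy : S × S) : Set (Seq × Seq) := cyl xy.1 ×ˢ cyl xy.2

/-- Prefix (partial order) on S². -/
def Pre2 (a b : S × S) : Prop := a.1 <+: b.1 ∧ a.2 <+: b.2

/-- A pair of strings is a (strict) prefix of a pair of sequences. -/
def Pre2Seq (a : S × S) (ω : Seq × Seq) : Prop := PrefixSeq a.1 ω.1 ∧ PrefixSeq a.2 ω.2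

/-- Recursively enumerable subset of a primcodable type. -/
def RESet {β : Type} [Primcodable β] (A : Set β) : Prop :=
  ∃ f : ℕ → Option β, Computable f ∧ A = {a | ∃ n, f n = some a}

/-- A computable probability measure on Ω. -/
def ComputableProb (P : Measure Seq) : Prop :=
  IsProbabilityMeasure P ∧
    ∃ p : S × ℕ → ℚ, Computable p ∧
      ∀ (x : S) (k : ℕ), 0 < k → |(P (cyl x)).toReal - (p (x, k) : ℝ)| < 1 / k

/-- A computable probability measure on Ω². -/
def ComputableProb2 (P : Measure (Seq × Seq)) : Prop :=
  IsProbabilityMeasure P ∧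
    ∃ p : (S × S) × ℕ → ℚ, Computable p ∧
      ∀ (xy : S × S) (k : ℕ), 0 < k → |(P (cyl2 xy)).toReal - (p (xy, k) : ℝ)| < 1 / k

/-- Ũ_n, the open set covered by the n-th level of a test. -/
def testUnion {α β : Type} (C : β → Set α) (U : Set (ℕ × β)) (n : ℕ) : Set α :=
  ⋃ x ∈ {x | (n, x) ∈ U}, C x

/-- Martin-Löf test w.r.t. a measure, generic in the cylinder function `C`. -/
def IsMLTest {α β : Type} [MeasurableSpace α] [Primcodable β]
    (C : β → Set α) (P : Measure α) (U : Set (ℕ × β)) : Prop :=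
  RESet U ∧ (∀ n, testUnion C U (n + 1) ⊆ testUnion C U n) ∧
    ∀ n, P (testUnion C U n) < (2⁻¹ : ℝ≥0∞) ^ n

/-- Martin-Löf randomness: ω avoids the limit of every test. -/
def MLRandom {α β : Type} [MeasurableSpace α] [Primcodable β]
    (C : β → Set α) (P : Measure α) (ω : α) : Prop :=
  ∀ U, IsMLTest C P U → ω ∉ ⋂ n, testUnion C U n

/-- ω ∈ R^P, for P on Ω. -/
abbrev Random1 (P : Measure Seq) (ω : Seq) : Prop := MLRandom cyl P ω

/-- ω ∈ R^P, for P on Ω². -/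
abbrev Random2 (P : Measure (Seq × Seq)) (ω : Seq × Seq) : Prop := MLRandom cyl2 P ω

/-- Marginal distribution P_X on the first coordinate. -/
noncomputable def margX (P : Measure (Seq × Seq)) : Measure Seq := P.map Prod.fst

/-- Marginal distribution P_Y on the second coordinate. -/
noncomputable def margY (P : Measure (Seq × Seq)) : Measure Seq := P.map Prod.snd

/-- Conditional probability P(x|y) = P(x,y)/P_Y(y), with value 0 when P_Y(y) = 0. -/
noncomputable def condP (P : Measure (Seq × Seq)) (x y : S) : ℝ :=
  (P (cyl2 (x, y))).toReal / (P (Set.univ ×ˢ cyl y)).toReal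

/-- P(x|yinf) := lim_{y → yinf} P(x|y) along prefixes of yinf (junk value if no limit). -/
noncomputable def condPLim (P : Measure (Seq × Seq)) (x : S) (yinf : Seq) : ℝ :=
  limUnder atTop fun m => condP P x (seqTake yinf m)

/-- Conditional probability P(y|x) = P(x,y)/P_X(x), with value 0 when P_X(x) = 0. -/
noncomputable def condX (P : Measure (Seq × Seq)) (y x : S) : ℝ :=
  (P (cyl2 (x, y))).toReal / (P (cyl x ×ˢ Set.univ)).toReal

/-- P(y|xinf) := lim_{x → xinf} P(y|x) along prefixes of xinf (junk value if no limit). -/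
noncomputable def condXLim (P : Measure (Seq × Seq)) (y : S) (xinf : Seq) : ℝ :=
  limUnder atTop fun m => condX P y (seqTake xinf m)

/-- The set S ∪ Ω of finite or infinite binary sequences. -/
inductive SW : Type where
  | fin : S → SW
  | inf : Seq → SW

/-- Prefix order ⊑ on S ∪ Ω. -/
def SW.le : SW → SW → Prop
  | .fin x, .fin y => x <+: y
  | .fin x, .inf ω => PrefixSeq x ω
  | .inf ω, .inf ω' => ω = ω'
  | .inf _, .fin _ => False

/-- (S ∪ Ω)². -/
abbrev SW2 : Type := SW × SW

/-- Componentwise prefix order ⊑ on (S ∪ Ω)². -/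
def SW2.le (a b : SW2) : Prop := SW.le a.1 b.1 ∧ SW.le a.2 b.2

/-- Length |x| ∈ ℕ∞ of an element of S ∪ Ω. -/
def SW.len : SW → ℕ∞
  | .fin x => (x.length : ℕ∞)
  | .inf _ => ⊤

/-- |p| = |p₁| + |p₂| for p ∈ (S ∪ Ω)². -/
def SW2.len (a : SW2) : ℕ∞ := SW.len a.1 + SW.len a.2

/-- Δ(x) for x ∈ S ∪ Ω. -/
def SW.cylW : SW → Set Seq
  | .fin x => cyl x
  | .inf ω => {ω}

/-- Δ(x,y) for (x,y) ∈ (S ∪ Ω)². -/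
def SW2.cylW (a : SW2) : Set (Seq × Seq) := SW.cylW a.1 ×ˢ SW.cylW a.2

/-- Embedding S → S ∪ Ω. -/
def emb1 (x : S) : SW := SW.fin x

/-- Embedding S² → (S ∪ Ω)². -/
def emb2 (p : S × S) : SW2 := (SW.fin p.1, SW.fin p.2)

/-- Embedding Ω² → (S ∪ Ω)². -/
def inf2 (ω : Seq × Seq) : SW2 := (SW.inf ω.1, SW.inf ω.2)

/-- Least upper bound with respect to a relation. -/
def IsSupRel {V : Type} (le : V → V → Prop) (A : Set V) (s : V) : Prop :=
  (∀ a ∈ A, le a s) ∧ ∀ b, (∀ a ∈ A, le a b) → le s b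

/-- `f` is a computable monotone function defined by an r.e. set `F` satisfying
condition (3) of the paper:  (λ,λ) ∈ F_p and ⋁_{p'⊑p} F_{p'} exists for every p,
and f(q) = ⋁ {x : ∃ p' ⊑ q, (p',x) ∈ F}. -/
def CompMono {D E : Type} {W V : Type} [Primcodable D] [Primcodable E]
    (embD : D → W) (leW : W → W → Prop) (embE : E → V) (leV : V → V → Prop)
    (eps : E) (f : W → V) : Prop :=
  ∃ F : Set (D × E), RESet F ∧
    (∀ p : D, (p, eps) ∈ F ∧
        ∃ s, IsSupRel leV (embE '' {x | ∃ p' : D, leW (embD p') (embD p) ∧ (p', x) ∈ F}) s) ∧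
    ∀ q : W, IsSupRel leV (embE '' {x | ∃ p' : D, leW (embD p') q ∧ (p', x) ∈ F}) (f q)

/-- Computable monotone function (S ∪ Ω)² → (S ∪ Ω)². -/
def CompMono22 (f : SW2 → SW2) : Prop := CompMono emb2 SW2.le emb2 SW2.le (([], []) : S × S) f

/-- Computable monotone function S ∪ Ω → (S ∪ Ω)². -/
def CompMono12 (g : SW → SW2) : Prop := CompMono emb1 SW.le emb2 SW2.le (([], []) : S × S) g

/-- Computable monotone function (S ∪ Ω)² → S ∪ Ω. -/
def CompMono21 (e : SW2 → SW) : Prop := CompMono emb2 SW2.le emb1 SW.le ([] : S) e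

/-- Computable monotone function S ∪ Ω → S ∪ Ω. -/
def CompMono11 (ρ : SW → SW) : Prop := CompMono emb1 SW.le emb1 SW.le ([] : S) ρ

/-- Km²_f(x) := min{|p₁|+|p₂| : x ⊑ f(p₁,p₂)} ∈ ℕ∞. -/
noncomputable def Km2 (f : SW2 → SW2) (x : SW2) : ℕ∞ :=
  ⨅ (p : SW2) (_ : SW2.le x (f p)), SW2.len p

/-- Km_f(x) := min{|p| : x ⊑ f(p,λ)} ∈ ℕ∞. -/
noncomputable def Km1 (f : SW2 → SW2) (x : SW2) : ℕ∞ :=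
  ⨅ (p : SW) (_ : SW2.le x (f (p, SW.fin []))), SW.len p

/-- Km(x|y) := min{|p| : (x,λ) ⊑ u(p,y)} ∈ ℕ∞. -/
noncomputable def KmCond (u : SW2 → SW2) (x y : SW) : ℕ∞ :=
  ⨅ (p : SW) (_ : SW2.le (x, SW.fin []) (u (p, y))), SW.len p

/-- Km_g(x) := min{|p| : x ⊑ g(p)} for g : S ∪ Ω → (S ∪ Ω)². -/
noncomputable def KmOf12 (g : SW → SW2) (x : SW2) : ℕ∞ :=
  ⨅ (p : SW) (_ : SW2.le x (g p)), SW.len p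

/-- Optimality of a computable monotone function on (S ∪ Ω)². -/
def Optimal (u : SW2 → SW2) : Prop :=
  CompMono22 u ∧
    ∀ f : SW2 → SW2, CompMono22 f → ∃ c : ℕ, ∀ x : SW2, Km2 u x ≤ Km2 f x + (c : ℕ∞)

/-- 2^{-n} for n ∈ ℕ∞ (with 2^{-∞} = 0), as an extended nonnegative real. -/
noncomputable def tpow (n : ℕ∞) : ℝ≥0∞ := if n = ⊤ then 0 else (2⁻¹ : ℝ≥0∞) ^ n.toNat

/-- Non-overlapping subset of (S ∪ Ω)². -/
def NonOverlapW (A : Set SW2) : Prop := A.Pairwise fun a b => SW2.cylW a ∩ SW2.cylW b = ∅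

/-- Non-overlapping subset of S². -/
def NonOverlapF (A : Set (S × S)) : Prop := A.Pairwise fun a b => cyl2 a ∩ cyl2 b = ∅

/-- Condition (4): any two members of A are comparable or have disjoint cylinders. -/
def Cond4 (A : Set (S × S)) : Prop :=
  ∀ a ∈ A, ∀ b ∈ A, Pre2 a b ∨ Pre2 b a ∨ cyl2 a ∩ cyl2 b = ∅

/-- Condition (5): relative complements of cylinders are non-overlapping unions within A. -/
def Cond5 (A : Set (S × S)) : Prop :=
  ∀ a ∈ A, ∀ b ∈ A, ∃ α ⊆ A, NonOverlapF α ∧ cyl2 a ∩ (cyl2 b)ᶜ = ⋃ z ∈ α, cyl2 z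

/-- A(xinf) := {x ∈ A | x ⊏ xinf}. -/
def Asec (A : Set (S × S)) (ω : Seq × Seq) : Set (S × S) := {a ∈ A | Pre2Seq a ω}

/-- sup_{x ∈ A} (−log P(x) − K(x)) < ∞. -/
def KmBound (P : Measure (Seq × Seq)) (K : S × S → ℕ∞) (A : Set (S × S)) : Prop :=
  ∃ c : ℝ, ∀ x ∈ A, ∀ k : ℕ, K x = (k : ℕ∞) →
    0 < P (cyl2 x) ∧ -Real.logb 2 ((P (cyl2 x)).toReal) ≤ (k : ℝ) + c

/-- sup_{x ∈ A} |log P(x) + K(x)| < ∞. -/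
def KmBoundAbs (P : Measure (Seq × Seq)) (K : S × S → ℕ∞) (A : Set (S × S)) : Prop :=
  ∃ c : ℝ, ∀ x ∈ A, ∃ k : ℕ, K x = (k : ℕ∞) ∧ 0 < P (cyl2 x) ∧
    |Real.logb 2 ((P (cyl2 x)).toReal) + (k : ℝ)| ≤ c

/-- The conditional probability P(·|yinf) is computable relative to the oracle yinf:
there is a partial computable A(x,y,k), monotone in y, approximating P(x|yinf)
to within 1/k along prefixes y of yinf. -/
def CondComputableAt (P : Measure (Seq × Seq)) (yinf : Seq) : Prop :=
  ∃ A : (S × S) × ℕ →. ℚ, Partrec A ∧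
    (∀ (x y z : S) (k : ℕ) (q : ℚ), q ∈ A ((x, y), k) → y <+: z → q ∈ A ((x, z), k)) ∧
    ∀ (x : S) (k : ℕ), 0 < k → ∃ (m : ℕ) (q : ℚ), q ∈ A ((x, seqTake yinf m), k) ∧
      |condPLim P x yinf - (q : ℝ)| < 1 / k

/-- A Martin-Löf test w.r.t. Q which is r.e. relative to the oracle yinf. -/
def RelMLTest (Q : Measure Seq) (yinf : Seq) (U : ℕ → Set S) : Prop :=
  (∃ B : (ℕ × ℕ) × S →. S, Partrec B ∧
      (∀ (i n : ℕ) (y z x : S), x ∈ B ((i, n), y) → y <+: z → x ∈ B ((i, n), z)) ∧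
      ∀ n, U n = {x | ∃ i m, x ∈ B ((i, n), seqTake yinf m)}) ∧
  (∀ n, (⋃ x ∈ U (n + 1), cyl x) ⊆ ⋃ x ∈ U n, cyl x) ∧
  ∀ n, Q (⋃ x ∈ U n, cyl x) < (2⁻¹ : ℝ≥0∞) ^ n

/-- Martin-Löf randomness w.r.t. Q relative to the oracle yinf. -/
def RelMLRandom (Q : Measure Seq) (yinf xinf : Seq) : Prop :=
  ∀ U, RelMLTest Q yinf U → xinf ∉ ⋂ n, ⋃ x ∈ U n, cyl x

/-- Likelihood ratio r(x) = Q(x)/P(x), with value 0 when P(x) = 0. -/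
noncomputable def ratio (P Q : Measure Seq) (x : S) : ℝ :=
  (Q (cyl x)).toReal / (P (cyl x)).toReal

/-- P(·|yinf) f,(xinf,yinf)-effectively converges with rate g. -/
def EffConv (P : Measure (Seq × Seq)) (xinf yinf : Seq) (f : ℕ → ℚ) (g : ℕ → ℕ) : Prop :=
  Computable g ∧ Monotone g ∧
    ∀ x y : S, PrefixSeq x xinf → PrefixSeq y yinf → g x.length ≤ y.length →
      |condP P x y / condPLim P x yinf - 1| < (f x.length : ℝ)

/-- A_g(xinf,yinf) := {(x,y) : |y| = g(|x|), (x,y) ⊏ (xinf,yinf)}. -/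
def AgSec (g : ℕ → ℕ) (xinf yinf : Seq) : Set (S × S) :=
  {xy | xy.2.length = g xy.1.length ∧ PrefixSeq xy.1 xinf ∧ PrefixSeq xy.2 yinf}

/-- A uniformly computable family of probability measures on Ω. -/
def UnifComputableFam (Pn : ℕ → Measure Seq) : Prop :=
  (∀ n, IsProbabilityMeasure (Pn n)) ∧
    ∃ A : (ℕ × S) × ℕ → ℚ, Computable A ∧
      ∀ (n : ℕ) (x : S) (k : ℕ), 0 < k →
        |(A ((n, x), k) : ℝ) - ((Pn n) (cyl x)).toReal| < 1 / k

/-- A computable sequence of reals (e.g. a computable probability on ℕ). -/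
def ComputableRealSeq (α : ℕ → ℝ) : Prop :=
  ∃ a : ℕ × ℕ → ℚ, Computable a ∧ ∀ (n k : ℕ), 0 < k → |α n - (a (n, k) : ℝ)| < 1 / k

/-- The mixture Σ_n α(n) P_n. -/
noncomputable def mixture (α : ℕ → ℝ) (Pn : ℕ → Measure Seq) : Measure Seq :=
  Measure.sum fun n => ENNReal.ofReal (α n) • Pn n

/-- The conditional probability measure P(·|y) on Ω, for a finite string y. -/
noncomputable def condMeasGivenY (P : Measure (Seq × Seq)) (y : S) : Measure Seq :=
  (P (Set.univ ×ˢ cyl y))⁻¹ • ((P.restrict (Set.univ ×ˢ cyl y)).map Prod.fst)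

/-- The posterior distribution P_{Y|X}(·|x) on Ω, for a finite string x. -/
noncomputable def postMeas (P : Measure (Seq × Seq)) (x : S) : Measure Seq :=
  (P (cyl x ×ˢ Set.univ))⁻¹ • ((P.restrict (cyl x ×ˢ Set.univ)).map Prod.snd)

/-! ### Computability of numerators and denominators -/

/-- The pairing of the codes of numerator and denominator of `q`, that is, its code under the
`Encodable ℚ` instance. It differs from the code under `Primcodable ℚ`, which comes from
`Denumerable ℚ`. -/
def ratCode (q : ℚ) : ℕ := @Encodable.encode ℚ Rat.instEncodable q

open Classical in
/-- The `Primcodable` code of `q` is the rank of `ratCode q` among all codes. -/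
theorem encode_rat (q : ℚ) : @Encodable.encode ℚ Primcodable.toEncodable q =
   ((List.range (ratCode q)).filter (fun m => m ∈ Set.range ratCode)).length := by
  rw [← List.countP_eq_length_filter]
  have : @Encodable.encode ℚ Primcodable.toEncodable q = List.countP (fun m => @decide (m ∈ Set.range ratCode) (@Encodable.decidableRangeEncode ℚ Rat.instEncodable m)) (List.range (ratCode q)) := rfl
  rw [this]
  congr 1
  ext m
  simp

theorem ratCode_eq (q : ℚ) : ratCode q = Nat.pair (Encodable.encode q.num) q.den := rfl

theorem intCode (z : ℤ) : Encodable.encode z = if 0 ≤ z then 2 * z.toNat else 2 * (-z).toNat - 1 := by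
  rcases z with m | m
  · show Equiv.natSumNatEquivNat (Sum.inl m) = _
    simp
  · show Equiv.natSumNatEquivNat (Sum.inr m) = _
    simp [Int.negSucc_eq]
    split_ifs <;> omega

/-- `(c + 1) / 2` is the absolute value of the integer with code `c`, so a number is a code exactly
when it is the code of a reduced fraction. -/
theorem mem_range_ratCode (m : ℕ) : m ∈ Set.range ratCode ↔
   0 < m.unpair.2 ∧ ((m.unpair.1 + 1) / 2).Coprime m.unpair.2 := by
  constructor
  · rintro ⟨q, rfl⟩
    rw [ratCode_eq]
    simp only [Nat.unpair_pair, q.den_pos, true_and]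
    convert q.reduced
    rw [intCode]
    split_ifs <;> omega
  · rintro ⟨h1, h2⟩
    obtain ⟨z, hz⟩ : ∃ z : ℤ, Encodable.encode z = m.unpair.1 :=
      ⟨Denumerable.ofNat ℤ m.unpair.1, Denumerable.encode_ofNat _⟩
    refine ⟨⟨z, m.unpair.2, h1.ne', ?_⟩, ?_⟩
    · convert h2
      rw [← hz, intCode]
      split_ifs <;> omega
    · rw [ratCode_eq]; simp [hz]

/-- A characterisation of coprimality that involves only a bounded quantifier. -/
theorem coprime_iff (a b : ℕ) (hb : 0 < b): a.Coprime b ↔ ∀ d < b + 1, d = 1 ∨ a % d ≠ 0 ∨ b % d ≠ 0 := by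
  constructor
  · intro h d hd
    by_contra! H
    exact H.1 (Nat.eq_one_of_dvd_coprimes h (Nat.dvd_of_mod_eq_zero H.2.1) (Nat.dvd_of_mod_eq_zero H.2.2))
  · intro h
    rcases h (a.gcd b) (Nat.lt_succ_of_le (Nat.gcd_le_right _ hb)) with h | h | h
    · exact h
    · exact absurd (Nat.mod_eq_zero_of_dvd (Nat.gcd_dvd_left a b)) h
    · exact absurd (Nat.mod_eq_zero_of_dvd (Nat.gcd_dvd_right a b)) h

theorem primrec_range : PrimrecPred (fun m => m ∈ Set.range ratCode) := by
  have h2 : PrimrecRel (fun (d m : ℕ) => d = 1 ∨ ((m.unpair.1 + 1) / 2) % d ≠ 0 ∨ m.unpair.2 % d ≠ 0) := by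
    refine PrimrecPred.or ?_ (PrimrecPred.or (PrimrecPred.not ?_) (PrimrecPred.not ?_))
    · exact Primrec.eq.comp Primrec.fst (.const 1)
    · exact Primrec.eq.comp (Primrec.nat_mod.comp (Primrec.nat_div.comp (Primrec.succ.comp (Primrec.fst.comp (Primrec.unpair.comp Primrec.snd))) (.const 2)) Primrec.fst) (.const 0)
    · exact Primrec.eq.comp (Primrec.nat_mod.comp (Primrec.snd.comp (Primrec.unpair.comp Primrec.snd)) Primrec.fst) (.const 0)
  have h3 := h2.forall_lt
  have h4 : PrimrecPred (fun m : ℕ => 0 < m.unpair.2) := Primrec.nat_lt.comp (.const 0) (Primrec.snd.comp Primrec.unpair)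
  refine PrimrecPred.of_eq (h4.and (PrimrecRel.comp h3 (Primrec.succ.comp (Primrec.snd.comp Primrec.unpair)) .id)) fun m => ?_
  rw [mem_range_ratCode]
  exact and_congr_right fun h => (coprime_iff _ _ h).symm

/-- Unbounded search for a witness of a decidable relation is computable if it always succeeds. -/
theorem computable_find {α : Type} [Primcodable α] {R : α → ℕ → Bool} (hR : Computable₂ R) (hex : ∀ a, ∃ n, R a n = true) :
    ∃ f : α → ℕ, Computable f ∧ ∀ a, R a (f a) = true := by
  refine ⟨fun a => Nat.find (hex a), ?_, fun a => Nat.find_spec (hex a)⟩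
  refine (Partrec.rfind (p := fun a n => Part.some (R a n)) hR).of_eq fun a => ?_
  apply Part.eq_some_iff.2
  refine Nat.mem_rfind.2 ?_
  refine ⟨by simpa using (Nat.find_spec (hex a)).symm, fun {m} hm => ?_⟩
  have := Nat.find_min (hex a) hm
  simp at this
  simp [this]

theorem computable_ratCode : Computable ratCode := by
  classical
  have hP : Primrec (fun n => ((List.range n).filter (fun m => m ∈ Set.range ratCode)).length) :=
    Primrec.list_length.comp ((Primrec.listFilter primrec_range).comp Primrec.list_range)
  let R : ℚ → ℕ → Bool := fun q n => decide (n ∈ Set.range ratCode ∧ @Encodable.encode ℚ Primcodable.toEncodable q = ((List.range n).filter (fun m => m ∈ Set.range ratCode)).length)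
  have hR : PrimrecRel (fun (q:ℚ) n => n ∈ Set.range ratCode ∧ @Encodable.encode ℚ Primcodable.toEncodable q = ((List.range n).filter (fun m => m ∈ Set.range ratCode)).length) := 
     PrimrecPred.and (primrec_range.comp Primrec.snd) (Primrec.eq.comp (Primrec.encode.comp Primrec.fst) (hP.comp Primrec.snd))
  obtain ⟨f, hf, hfs⟩ := computable_find (R := R) hR.decide.to_comp (fun q => ⟨ratCode q, by simpa [R] using encode_rat q⟩)
  refine hf.of_eq fun q => ?_
  obtain ⟨⟨q', h1⟩, h2⟩ := of_decide_eq_true (hfs q)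
  rw [← h1] at h2 ⊢
  rw [← encode_rat] at h2
  rw [@Encodable.encode_injective ℚ Primcodable.toEncodable _ _ h2]

/-- The integer part of `max q 0 * K`, read off from the code of `q`. -/
def ratFloor (q : ℚ) (K : ℕ) : ℕ :=
  if (ratCode q).unpair.1 % 2 = 0 then
    (ratCode q).unpair.1 / 2 * K / (ratCode q).unpair.2 else 0

theorem computable_ratFloor : Computable₂ ratFloor := by
  have hprim : Primrec₂ fun c K : ℕ => if c.unpair.1 % 2 = 0 then
      c.unpair.1 / 2 * K / c.unpair.2 else 0 := by
    have h1 : Primrec fun p : ℕ × ℕ => p.1.unpair.1 :=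
      Primrec.fst.comp (Primrec.unpair.comp Primrec.fst)
    have h2 : Primrec fun p : ℕ × ℕ => p.1.unpair.2 :=
      Primrec.snd.comp (Primrec.unpair.comp Primrec.fst)
    exact Primrec.ite (Primrec.eq.comp (Primrec.nat_mod.comp h1 (.const 2)) (.const 0))
      (Primrec.nat_div.comp (Primrec.nat_mul.comp (Primrec.nat_div.comp h1 (.const 2))
        Primrec.snd) h2) (.const 0)
  exact hprim.to_comp.comp (computable_ratCode.comp Computable.fst) Computable.snd

theorem ratFloor_eq (q : ℚ) (K : ℕ) : ratFloor q K = ⌊max q 0 * K⌋₊ := by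
  unfold ratFloor
  simp only [ratCode_eq, Nat.unpair_pair, intCode]
  rcases le_or_gt 0 q with hq | hq
  · have hn : 0 ≤ q.num := Rat.num_nonneg.2 hq
    rw [if_pos hn, if_pos (by omega), max_eq_left hq]
    have : q * K = ((q.num.toNat * K : ℕ) : ℚ) / (q.den : ℕ) := by
      have h3 : ((q.num.toNat : ℕ) : ℚ) = q.num := by
        exact_mod_cast Int.toNat_of_nonneg hn
      conv_lhs => rw [← Rat.num_div_den q]
      push_cast
      rw [h3]; ring
    rw [this, Nat.floor_div_natCast, Nat.floor_natCast]
    congr 2; omega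
  · have hn : q.num < 0 := Rat.num_neg.2 hq
    rw [if_neg (not_le.2 hn), if_neg (by omega), max_eq_right hq.le]
    simp

/-! ### Approximating probabilities by natural numbers -/

/-- For a computable probability, the measures of cylinders, rescaled by `k + 1`, are approximated
by computable natural numbers to within `2`: one unit for the rational approximation, one for rounding down. -/
theorem ComputableProb.exists_nat_approx {P : Measure Seq} (hP : ComputableProb P) :
    ∃ a : S × ℕ → ℕ, Computable a ∧
      ∀ x k, |(P (cyl x)).toReal * (k + 1) - a (x, k)| ≤ 2 := by
  obtain ⟨-, p, hp, hpa⟩ := hP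
  have hs : Computable fun z : S × ℕ => (z.1, z.2 + 1) :=
    Computable.fst.pair (Primrec.succ.to_comp.comp Computable.snd)
  refine ⟨fun z => ratFloor (p (z.1, z.2 + 1)) (z.2 + 1),
    computable_ratFloor.comp (hp.comp hs) (Computable.snd.comp hs), fun x k => ?_⟩
  have h := hpa x (k + 1) k.succ_pos
  simp only [ratFloor_eq]
  set q := p (x, k + 1)
  set y := (P (cyl x)).toReal
  have hy : 0 ≤ y := ENNReal.toReal_nonneg
  have hk : (0 : ℝ) < k + 1 := by positivity
  have h1 : |y - max (q : ℝ) 0| ≤ 1 / (k + 1) := by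
    push_cast at h
    refine le_trans ?_ h.le
    conv_lhs => rw [← max_eq_left hy]
    exact abs_max_sub_max_le_abs y q 0
  have h2 : |y * (k + 1) - max (q : ℝ) 0 * (k + 1)| ≤ 1 := by
    rw [← sub_mul, abs_mul, abs_of_pos hk]
    calc _ ≤ 1 / ((k : ℝ) + 1) * (k + 1) := by gcongr
      _ = 1 := by field_simp
  have h3 : (0 : ℚ) ≤ max q 0 * (k + 1 : ℕ) := by positivity
  have h4 := Nat.floor_le h3
  have h5 := Nat.lt_floor_add_one (max q 0 * (k + 1 : ℕ))
  have h4' : ((⌊max q 0 * (k + 1 : ℕ)⌋₊ : ℕ) : ℝ) ≤ max (q : ℝ) 0 * (k + 1) := by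
    exact_mod_cast h4
  have h5' : max (q : ℝ) 0 * (k + 1) < ((⌊max q 0 * (k + 1 : ℕ)⌋₊ : ℕ) : ℝ) + 1 := by
    exact_mod_cast h5
  rw [abs_le] at h2 ⊢
  constructor <;> linarith

theorem computable_list_sum {a : S × ℕ → ℕ} (ha : Computable a) :
    Computable₂ fun (L : List S) (k : ℕ) => (L.map fun x => a (x, k)).sum := by
  have h : Computable fun z : List S × ℕ => Nat.rec (motive := fun _ => ℕ) 0
      (fun i acc => acc + (z.1[i]?.map fun x => a (x, z.2)).getD 0) z.1.length := by
    refine Computable.nat_rec (h := fun z (w : ℕ × ℕ) =>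
      w.2 + (z.1[w.1]?.map fun x => a (x, z.2)).getD 0)
      (Computable.list_length.comp Computable.fst) (Computable.const 0) ?_
    refine (Primrec.nat_add.to_comp).comp (Computable.snd.comp Computable.snd) ?_
    refine Computable.option_getD ?_ (Computable.const 0)
    refine Computable.option_map
      (Computable.list_getElem?.comp (Computable.fst.comp Computable.fst)
        (Computable.fst.comp Computable.snd)) ?_
    exact ha.comp (Computable.snd.pair
      (Computable.snd.comp (Computable.fst.comp Computable.fst)))
  refine h.of_eq fun ⟨L, k⟩ => ?_
  have key : ∀ n, Nat.rec (motive := fun _ => ℕ) 0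
      (fun i acc => acc + (L[i]?.map fun x => a (x, k)).getD 0) n =
      ((L.take n).map fun x => a (x, k)).sum := by
    intro n
    induction n with
    | zero => simp
    | succ n ih =>
      simp only [ih, List.take_add_one, List.map_append, List.sum_append]
      cases L[n]? <;> simp
  simpa using key L.length

/-- The approximation errors of a sum add up. -/
theorem abs_list_sum_sub_le {μ : S → ℝ} {a : S × ℕ → ℕ} {k : ℕ}
    (h : ∀ x, |μ x * (k + 1) - a (x, k)| ≤ 2) (L : List S) :
    |(L.map μ).sum * (k + 1) - ((L.map fun x => a (x, k)).sum : ℕ)| ≤ 2 * L.length := by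
  induction L with
  | nil => simp
  | cons x L ih =>
    have := h x
    simp only [List.map_cons, List.sum_cons, List.length_cons]
    push_cast at ih ⊢
    rw [abs_le] at *
    constructor <;> linarith

/-! ### Cylinders -/

theorem mem_cyl_iff {x : S} {ω : Seq} : ω ∈ cyl x ↔ seqTake ω x.length = x := by
  constructor
  · intro h
    refine List.ext_get (by simp [seqTake]) fun i h1 h2 => ?_
    simpa [seqTake] using (h ⟨i, h2⟩).symm
  · intro h i
    have : x.get i = (seqTake ω x.length).get ⟨i, by simp [seqTake]⟩ := by
      simp [h]
    rw [this]; simp [seqTake]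

theorem length_seqTake (ω : Seq) (m : ℕ) : (seqTake ω m).length = m := by simp [seqTake]

theorem self_mem_cyl_seqTake (ω : Seq) (m : ℕ) : ω ∈ cyl (seqTake ω m) := by
  rw [mem_cyl_iff, length_seqTake]

theorem mem_cyl_seqTake {ω ω' : Seq} {m : ℕ} :
    ω' ∈ cyl (seqTake ω m) ↔ ∀ i < m, ω' i = ω i := by
  rw [mem_cyl_iff, length_seqTake]
  simp only [seqTake, List.ofFn_inj, funext_iff]
  exact ⟨fun h i hi => h ⟨i, hi⟩, fun h i => h i i.2⟩

theorem measurableSet_cyl (x : S) : MeasurableSet (cyl x) := by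
  have : cyl x = ⋂ i : Fin x.length, (fun ω : Seq => ω i) ⁻¹' {x.get i} := by
    ext ω
    simp [cyl, PrefixSeq, eq_comm]
  rw [this]
  exact MeasurableSet.iInter fun i => measurable_pi_apply _ (measurableSet_singleton _)

/-- The union of the cylinders of a finite list of strings. -/
def cylUnion (L : List S) : Set Seq := ⋃ x ∈ {x | x ∈ L}, cyl x

theorem measurableSet_cylUnion (L : List S) : MeasurableSet (cylUnion L) :=
  MeasurableSet.biUnion (Set.to_countable _) fun x _ => measurableSet_cyl x

theorem cylUnion_eq (L : List S) : cylUnion L = ⋃ x ∈ L.toFinset, cyl x := by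
  ext; simp [cylUnion]

/-- Distinct strings of equal length have disjoint cylinders, so their measures add up. -/
theorem measure_cylUnion (P : Measure Seq) [IsProbabilityMeasure P] {L : List S} {m : ℕ}
    (hL : ∀ x ∈ L, x.length = m) (hd : L.Nodup) :
    (P (cylUnion L)).toReal = (L.map fun x => (P (cyl x)).toReal).sum := by
  rw [cylUnion_eq, measure_biUnion_finset, ENNReal.toReal_sum (fun _ _ => measure_ne_top _ _),
    List.sum_toFinset _ hd]
  · intro x hx y hy hxy
    refine Set.disjoint_left.2 fun ω h1 h2 => hxy ?_
    rw [mem_cyl_iff, hL _ (by simpa using hx)] at h1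
    rw [mem_cyl_iff, hL _ (by simpa using hy)] at h2
    exact h1.symm.trans h2
  · exact fun x _ => measurableSet_cyl x

theorem exists_cyl_subset {O : Set Seq} (hO : IsOpen O) {ω : Seq} (hω : ω ∈ O) :
    ∃ m, cyl (seqTake ω m) ⊆ O := by
  obtain ⟨I, u, h1, h2⟩ := isOpen_pi_iff.1 hO ω hω
  refine ⟨I.sup id + 1, fun ω' h => h2 fun i hi => ?_⟩
  rw [mem_cyl_seqTake.1 h i (Nat.lt_succ_of_le (Finset.le_sup (f := id) hi))]
  exact (h1 i hi).2

/-- An open set is approximated in measure from inside by finitely many strings of equal length: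
at level `m`, take all strings of length `m` whose cylinder is contained in the set. -/
theorem exists_list_of_isOpen (P : Measure Seq) {O : Set Seq} (hO : IsOpen O) {c : ℝ≥0∞}
    (hc : c < P O) : ∃ (m : ℕ) (L : List S), (∀ x ∈ L, x.length = m) ∧ L.Nodup ∧
      cylUnion L ⊆ O ∧ c < P (cylUnion L) := by
  classical
  let V : ℕ → Set Seq := fun m => {ω | cyl (seqTake ω m) ⊆ O}
  have hmono : Monotone V := fun m n hmn ω h ω' hω' =>
    (show cyl (seqTake ω m) ⊆ O from h) (mem_cyl_seqTake.2 fun i hi => mem_cyl_seqTake.1 hω' i (hi.trans_le hmn))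
  have hV : ⋃ m, V m = O := by
    ext ω
    rw [mem_iUnion]
    exact ⟨fun ⟨m, hm⟩ => hm (self_mem_cyl_seqTake ω m), exists_cyl_subset hO⟩
  rw [← hV, hmono.measure_iUnion, lt_iSup_iff] at hc
  obtain ⟨m, hm⟩ := hc
  let L : List S := ((Finset.univ : Finset (Fin m → Bool)).filter
    fun v => cyl (List.ofFn v) ⊆ O).toList.map List.ofFn
  have hL : ∀ x, x ∈ L ↔ x.length = m ∧ cyl x ⊆ O := by
    intro x
    simp only [L, List.mem_map, Finset.mem_toList, Finset.mem_filter, Finset.mem_univ, true_and]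
    constructor
    · rintro ⟨v, hv, rfl⟩
      exact ⟨by simp, hv⟩
    · rintro ⟨rfl, hx⟩
      exact ⟨x.get, by simpa using hx, by simp⟩
  refine ⟨m, L, fun x hx => ((hL x).1 hx).1,
    (Finset.nodup_toList _).map List.ofFn_injective,
    iUnion₂_subset fun x hx => ((hL x).1 hx).2, hm.trans_le (measure_mono fun ω hω => ?_)⟩
  exact mem_iUnion₂.2 ⟨seqTake ω m, (hL _).2 ⟨length_seqTake ω m, hω⟩,
    self_mem_cyl_seqTake ω m⟩

/-! ### Random sequences have full measure -/

theorem countable_computable {β : Type} [Primcodable β] :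
    {f : ℕ → Option β | Computable f}.Countable := by
  have : Function.Injective (fun f : {f : ℕ → Option β | Computable f} =>
      (⟨fun n => Encodable.encode (f.1 n), Computable.encode.comp f.2⟩ :
        {f : ℕ → ℕ // Computable f})) := by
    intro f g h
    ext1; funext n
    exact Encodable.encode_injective (congrFun (Subtype.ext_iff.1 h) n)
  exact this.countable

theorem ae_mlRandom (P : Measure Seq) : ∀ᵐ ω ∂P, Random1 P ω := by
  have hc : {U : Set (ℕ × S) | IsMLTest cyl P U}.Countable := by
    refine Set.Countable.mono ?_ ((countable_computable (β := ℕ × S)).image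
      fun f => {a | ∃ n, f n = some a})
    rintro U ⟨⟨f, hf, rfl⟩, -⟩
    exact ⟨f, hf, rfl⟩
  have h : ∀ᵐ ω ∂P, ∀ U ∈ {U : Set (ℕ × S) | IsMLTest cyl P U}, ω ∉ ⋂ n, testUnion cyl U n := by
    rw [ae_ball_iff hc]
    intro U hU
    rw [← measure_eq_zero_iff_ae_notMem]
    refine le_antisymm (ge_of_tendsto' (ENNReal.tendsto_pow_atTop_nhds_zero_of_lt_one
      (r := 2⁻¹) (by norm_num)) fun n => ?_) bot_le
    exact (measure_mono (iInter_subset _ n)).trans (hU.2.2 n).le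
  exact h

/-! ### Searching for sets of small `Q`- and large `P`-measure -/

/-- A decidable certificate, for approximations `a` of `P` and `b` of `Q`, that the list of strings
`w.2` satisfies `Q(cylUnion w.2) < 1 / N` and `P(cylUnion w.2) ≥ 1 / D`. Here `w.1.1` is the common
length of the strings and `w.1.2` the precision; `2 * w.2.length` bounds the total error of the
approximations. The list has no duplicates by the second clause, which is evidently
primitive recursive. -/
def Cert (a b : S × ℕ → ℕ) (D N : ℕ) (w : (ℕ × ℕ) × List S) : Prop :=
  ((∀ x ∈ w.2, x.length = w.1.1) ∧ ∀ x ∈ w.2, (w.2.filter (· = x)).length ≤ 1) ∧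
  ((w.2.map fun x => b (x, w.1.2)).sum + 2 * w.2.length) * N < w.1.2 + 1 ∧
  w.1.2 + 1 + 2 * w.2.length * D ≤ (w.2.map fun x => a (x, w.1.2)).sum * D

theorem nodup_iff_filter (L : List S) : L.Nodup ↔ ∀ x ∈ L, (L.filter (· = x)).length ≤ 1 := by
  rw [List.nodup_iff_count_le_one]
  have : ∀ x, (L.filter (· = x)).length = L.count x := by
    intro x
    rw [← List.countP_eq_length_filter, List.count]
    exact List.countP_congr (by simp)
  simp only [this]
  refine ⟨fun h x _ => h x, fun h x => ?_⟩
  by_cases hx : x ∈ L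
  · exact h x hx
  · simp [List.count_eq_zero_of_not_mem hx]

open Classical in
theorem computable_cert {a b : S × ℕ → ℕ} (ha : Computable a) (hb : Computable b) (D : ℕ) :
    Computable₂ fun N w => decide (Cert a b D N w) := by
  have h1 : PrimrecPred fun w : ((ℕ × ℕ) × List S) => ∀ x ∈ w.2, x.length = w.1.1 := by
    have : PrimrecRel fun (x : S) (m : ℕ) => x.length = m :=
      Primrec.eq.comp (Primrec.list_length.comp Primrec.fst) Primrec.snd
    exact PrimrecRel.comp this.forall_mem_list Primrec.snd (Primrec.fst.comp Primrec.fst)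
  have h2 : PrimrecPred fun w : ((ℕ × ℕ) × List S) =>
      ∀ x ∈ w.2, (w.2.filter (· = x)).length ≤ 1 := by
    have : PrimrecRel fun (x : S) (L : List S) => (L.filter (· = x)).length ≤ 1 := by
      refine Primrec.nat_le.comp (Primrec.list_length.comp ?_) (.const 1)
      refine (Primrec₂.comp (PrimrecRel.listFilter (R := fun (y x : S) => y = x) Primrec.eq)
        Primrec.snd Primrec.fst).of_eq fun z => ?_
      congr!
    exact PrimrecRel.comp this.forall_mem_list Primrec.snd Primrec.snd
  have hk : Computable fun z : ℕ × ((ℕ × ℕ) × List S) => z.2.1.2 :=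
    Computable.snd.comp (Computable.fst.comp Computable.snd)
  have hL : Computable fun z : ℕ × ((ℕ × ℕ) × List S) => z.2.2 :=
    Computable.snd.comp Computable.snd
  have hlen : Computable fun z : ℕ × ((ℕ × ℕ) × List S) => 2 * z.2.2.length :=
    (Primrec.nat_mul.to_comp).comp (Computable.const 2) (Computable.list_length.comp hL)
  have hsA := (computable_list_sum ha).comp hL hk
  have hsB := (computable_list_sum hb).comp hL hk
  have hadd := Primrec.nat_add.to_comp
  have hmul := Primrec.nat_mul.to_comp
  have hk1 := Primrec.succ.to_comp.comp hk
  have d1 := (Primrec.nat_lt.decide.to_comp).comp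
    (hmul.comp (hadd.comp hsB hlen) Computable.fst) hk1
  have d2 := (Primrec.nat_le.decide.to_comp).comp
    (hadd.comp hk1 (hmul.comp hlen (Computable.const D))) (hmul.comp hsA (Computable.const D))
  have d0 := ((h1.and h2).decide.to_comp).comp
    (Computable.snd : Computable fun z : ℕ × ((ℕ × ℕ) × List S) => z.2)
  refine ((Primrec.and.to_comp).comp d0 ((Primrec.and.to_comp).comp d1 d2)).of_eq fun z => ?_
  rw [Bool.eq_iff_iff]
  simp [Cert]

theorem cert_bounds {P Q : Measure Seq} [IsProbabilityMeasure P] [IsProbabilityMeasure Q]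
    {a b : S × ℕ → ℕ}
    (ha : ∀ x k, |(P (cyl x)).toReal * (k + 1) - a (x, k)| ≤ 2)
    (hb : ∀ x k, |(Q (cyl x)).toReal * (k + 1) - b (x, k)| ≤ 2)
    {D N : ℕ} {w : (ℕ × ℕ) × List S} (h : Cert a b D N w) :
    (Q (cylUnion w.2)).toReal * N < 1 ∧ 1 ≤ (P (cylUnion w.2)).toReal * D := by
  obtain ⟨⟨m, k⟩, L⟩ := w
  obtain ⟨⟨hl, hn⟩, h1, h2⟩ := h
  rw [← nodup_iff_filter] at hn
  dsimp only at *
  rw [measure_cylUnion P hl hn, measure_cylUnion Q hl hn]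
  have hA := abs_le.1 (abs_list_sum_sub_le (fun x => ha x k) L)
  have hB := abs_le.1 (abs_list_sum_sub_le (fun x => hb x k) L)
  set A := (L.map fun x => a (x, k)).sum
  set B := (L.map fun x => b (x, k)).sum
  set p := (L.map fun x => (P (cyl x)).toReal).sum
  set q := (L.map fun x => (Q (cyl x)).toReal).sum
  have h1' : ((B : ℝ) + 2 * L.length) * N < k + 1 := by exact_mod_cast h1
  have h2' : (k : ℝ) + 1 + 2 * L.length * D ≤ A * D := by exact_mod_cast h2
  have hk : (0 : ℝ) < k + 1 := by positivity
  have hN : (0 : ℝ) ≤ N := by positivity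
  have hD : (0 : ℝ) ≤ D := by positivity
  constructor
  · have := mul_le_mul_of_nonneg_right (by linarith : q * (k + 1) ≤ B + 2 * L.length) hN
    by_contra! hc
    nlinarith
  · have := mul_le_mul_of_nonneg_right (by linarith : A - 2 * L.length ≤ p * (k + 1)) hD
    by_contra! hc
    nlinarith

/-- Strict inequalities are certified once the precision is high enough. -/
theorem exists_cert {P Q : Measure Seq} [IsProbabilityMeasure P] [IsProbabilityMeasure Q]
    {a b : S × ℕ → ℕ}
    (ha : ∀ x k, |(P (cyl x)).toReal * (k + 1) - a (x, k)| ≤ 2)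
    (hb : ∀ x k, |(Q (cyl x)).toReal * (k + 1) - b (x, k)| ≤ 2)
    {D N m : ℕ} {L : List S} (hl : ∀ x ∈ L, x.length = m) (hn : L.Nodup)
    (hQ : (Q (cylUnion L)).toReal * N < 1) (hP : 1 < (P (cylUnion L)).toReal * D) :
    ∃ w, Cert a b D N w := by
  rw [measure_cylUnion P hl hn] at hP
  rw [measure_cylUnion Q hl hn] at hQ
  set p := (L.map fun x => (P (cyl x)).toReal).sum
  set q := (L.map fun x => (Q (cyl x)).toReal).sum
  obtain ⟨k, hk1, hk2⟩ : ∃ k : ℕ, 4 * L.length * N < (1 - q * N) * (k + 1) ∧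
      4 * L.length * D ≤ (p * D - 1) * (k + 1) := by
    have t : ∀ c : ℝ, 0 < c → Tendsto (fun k : ℕ => c * ((k : ℝ) + 1)) atTop atTop := fun c hc =>
      (tendsto_atTop_add_const_right _ _ tendsto_natCast_atTop_atTop).const_mul_atTop hc
    exact (((t _ (sub_pos.2 hQ)).eventually_gt_atTop _).and
      ((t _ (sub_pos.2 hP)).eventually_ge_atTop _)).exists
  have hA := abs_le.1 (abs_list_sum_sub_le (fun x => ha x k) L)
  have hB := abs_le.1 (abs_list_sum_sub_le (fun x => hb x k) L)
  -- The precision `k` makes the approximation error smaller than the slack in both hypotheses.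
  refine ⟨((m, k), L), ⟨hl, (nodup_iff_filter L).1 hn⟩, ?_, ?_⟩ <;> dsimp only
  · set B := (L.map fun x => b (x, k)).sum
    have := mul_le_mul_of_nonneg_right (by linarith : (B : ℝ) + 2 * L.length ≤
      q * (k + 1) + 4 * L.length) (Nat.cast_nonneg (α := ℝ) N)
    have : ((B : ℝ) + 2 * L.length) * N < k + 1 := by linarith
    exact_mod_cast this
  · set A := (L.map fun x => a (x, k)).sum
    have := mul_le_mul_of_nonneg_right (by linarith : p * (k + 1) - 4 * L.length ≤
      A - 2 * L.length) (Nat.cast_nonneg (α := ℝ) D)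
    have : (k : ℝ) + 1 + 2 * L.length * D ≤ A * D := by linarith
    exact_mod_cast this

/-- If for every `N` there is a list with `Q`-measure below `1 / N` and `P`-measure above `1 / D`,
then such lists can be chosen computably in `N`, with the bound on `P` weakened to `≥`. -/
theorem exists_computable_lists {P Q : Measure Seq} (hP : ComputableProb P)
    (hQ : ComputableProb Q) {D : ℕ}
    (h : ∀ N : ℕ, ∃ (m : ℕ) (L : List S), (∀ x ∈ L, x.length = m) ∧ L.Nodup ∧
      (Q (cylUnion L)).toReal * N < 1 ∧ 1 < (P (cylUnion L)).toReal * D) :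
    ∃ V : ℕ → List S, Computable V ∧ ∀ N, (Q (cylUnion (V N))).toReal * N < 1 ∧
      1 ≤ (P (cylUnion (V N))).toReal * D := by
  classical
  have := hP.1
  have := hQ.1
  obtain ⟨a, ha, ha'⟩ := hP.exists_nat_approx
  obtain ⟨b, hb, hb'⟩ := hQ.exists_nat_approx
  let W : ℕ → (ℕ × ℕ) × List S := fun t => (Encodable.decode t).getD ((0, 0), [])
  have hW : Computable W :=
    Computable.option_getD Computable.decode (Computable.const ((0, 0), []))
  obtain ⟨f, hf, hfs⟩ := computable_find (R := fun N t => decide (Cert a b D N (W t)))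
    ((computable_cert ha hb D).comp Computable.fst (hW.comp Computable.snd)) (fun N => by
      obtain ⟨m, L, h1, h2, h3, h4⟩ := h N
      obtain ⟨w, hw⟩ := exists_cert ha' hb' h1 h2 h3 h4
      exact ⟨Encodable.encode w, by
        simpa only [W, Encodable.encodek, Option.getD_some, decide_eq_true_eq] using hw⟩)
  exact ⟨fun N => (W (f N)).2, Computable.snd.comp (hW.comp hf),
    fun N => cert_bounds ha' hb' (of_decide_eq_true (hfs N))⟩

/-! ### The test and the theorem -/

/-- The test whose `n`-th level consists of the strings in `V m` for `m ≥ n`, so that its limit is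
the limit superior of the sets `cylUnion (V m)`. -/
def tailTest (V : ℕ → List S) : Set (ℕ × S) := {z | ∃ j, z.2 ∈ V (z.1 + j)}

theorem testUnion_tailTest (V : ℕ → List S) (n : ℕ) :
    testUnion cyl (tailTest V) n = ⋃ j, cylUnion (V (n + j)) := by
  ext ω
  simp only [testUnion, tailTest, cylUnion, mem_iUnion, mem_ofPred_eq, exists_prop]
  grind

theorem isMLTest_tailTest {Q : Measure Seq} {V : ℕ → List S} (hV : Computable V)
    (hQ : ∀ n, Q (cylUnion (V n)) ≤ 2⁻¹ ^ (n + 2)) : IsMLTest cyl Q (tailTest V) := by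
  refine ⟨⟨fun t => (V (t.unpair.1 + t.unpair.2.unpair.1))[t.unpair.2.unpair.2]?.map
    fun x => (t.unpair.1, x), ?_, ?_⟩, fun n => ?_, fun n => ?_⟩
  · have h1 : Computable fun t : ℕ => t.unpair.1 := Computable.fst.comp Computable.unpair
    have h2 : Computable fun t : ℕ => t.unpair.2 := Computable.snd.comp Computable.unpair
    exact Computable.option_map (Computable.list_getElem?.comp
      (hV.comp (Primrec.nat_add.to_comp.comp h1 (h1.comp h2))) (h2.comp h2))
      ((h1.comp Computable.fst).pair Computable.snd)
  · ext ⟨n, x⟩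
    simp only [tailTest, mem_ofPred_eq, Option.map_eq_some_iff, Prod.mk.injEq]
    constructor
    · rintro ⟨j, hj⟩
      obtain ⟨i, hi⟩ := List.mem_iff_getElem?.1 hj
      exact ⟨Nat.pair n (Nat.pair j i), x, by simpa using hi, by simp⟩
    · rintro ⟨t, y, hy, h1, rfl⟩
      exact ⟨_, h1 ▸ List.mem_of_getElem? hy⟩
  · rw [testUnion_tailTest, testUnion_tailTest]
    refine iUnion_subset fun j => subset_iUnion_of_subset (j + 1) ?_
    rw [show n + 1 + j = n + (j + 1) by omega]
  · rw [testUnion_tailTest]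
    have h2 : (2⁻¹ : ℝ≥0∞) ^ n ≠ 0 := by simp
    have h3 : (2⁻¹ : ℝ≥0∞) ^ n ≠ ⊤ := by simp
    calc Q (⋃ j, cylUnion (V (n + j))) ≤ ∑' j, Q (cylUnion (V (n + j))) := measure_iUnion_le _
      _ ≤ ∑' j : ℕ, 2⁻¹ ^ n * (2⁻¹ * 2⁻¹ ^ (j + 1)) := by
        refine ENNReal.tsum_le_tsum fun j => (hQ _).trans (le_of_eq ?_)
        ring
      _ = 2⁻¹ ^ n * 2⁻¹ := by
        rw [ENNReal.tsum_mul_left, ENNReal.tsum_mul_left, ENNReal.tsum_geometric_add_one]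
        norm_num
        rw [ENNReal.inv_mul_cancel (by norm_num) (by norm_num), mul_one]
      _ < 2⁻¹ ^ n := by
        conv_rhs => rw [← mul_one (2⁻¹ ^ n)]
        exact (ENNReal.mul_lt_mul_iff_right h2 h3).2 (by norm_num)

/-- Lemma 4: for computable probabilities P, Q on Ω,
R^P ⊆ R^Q implies P ≪ Q. -/
theorem random_subset_absolutely_continuous (P Q : Measure Seq)
    (hP : ComputableProb P) (hQ : ComputableProb Q) :
    {ω : Seq | Random1 P ω} ⊆ {ω : Seq | Random1 Q ω} → P ≪ Q := by
  intro hsub C hC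
  have := hP.1
  have := hQ.1
  by_contra hPC
  obtain ⟨D, hD⟩ : ∃ D : ℕ, (D : ℝ≥0∞)⁻¹ < P C := ENNReal.exists_inv_nat_lt hPC
  have hD0 : D ≠ 0 := by
    rintro rfl
    simp at hD
  have hDpos : (0 : ℝ) < D := by positivity
  -- The bound `1 / (N + 1)` for `Q` avoids a degenerate case at `N = 0`.
  obtain ⟨V, hV, hVs⟩ := exists_computable_lists hP hQ (D := D) fun N => by
    obtain ⟨O, hCO, hO, hQO⟩ := C.exists_isOpen_lt_of_lt (μ := Q) ((N : ℝ≥0∞) + 1)⁻¹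
      (by rw [hC]; simp)
    obtain ⟨m, L, h1, h2, h3, h4⟩ :=
      exists_list_of_isOpen P hO (hD.trans_le (measure_mono hCO))
    refine ⟨m, L, h1, h2, ?_, ?_⟩
    · have h := (ENNReal.toReal_lt_toReal (measure_ne_top _ _) (by simp)).2
        ((measure_mono h3).trans_lt hQO)
      rw [ENNReal.toReal_inv, ENNReal.toReal_add (by simp) (by simp)] at h
      simp only [ENNReal.toReal_natCast, ENNReal.toReal_one] at h
      have hN : (0 : ℝ) < N + 1 := by positivity
      have h0 : 0 ≤ (Q (cylUnion L)).toReal := ENNReal.toReal_nonneg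
      have h5 : (Q (cylUnion L)).toReal * (N + 1) < 1 := by
        rwa [← lt_div_iff₀ hN, one_div]
      linarith
    · have h := (ENNReal.toReal_lt_toReal (by simp [hD0]) (measure_ne_top _ _)).2 h4
      rw [ENNReal.toReal_inv, ENNReal.toReal_natCast] at h
      rwa [← div_lt_iff₀ hDpos, one_div]
  have hdouble : Primrec₂ fun _ y : ℕ => 2 * y := Primrec.nat_mul.comp (.const 2) Primrec.snd
  have hpow : Computable fun n : ℕ => 2 ^ (n + 2) := by
    refine Computable.of_eq (f := fun n => Nat.rec (motive := fun _ => ℕ) 4 (fun _ y => 2 * y) n)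
      (Primrec.nat_rec₁ 4 hdouble).to_comp fun n => ?_
    induction n with
    | zero => rfl
    | succ n ih => simp only [ih]; ring
  have htest := isMLTest_tailTest (Q := Q) (hV.comp hpow) fun n => by
    have h := (hVs (2 ^ (n + 2))).1
    rw [← ENNReal.toReal_le_toReal (measure_ne_top _ _) (by simp)]
    simp only [ENNReal.toReal_pow, ENNReal.toReal_inv, ENNReal.toReal_ofNat]
    push_cast at h
    rw [inv_pow, ← one_div]
    exact ((lt_div_iff₀ (by positivity)).2 h).le
  set U := tailTest fun n => V (2 ^ (n + 2))
  have hpos : (D : ℝ≥0∞)⁻¹ ≤ P (⋂ n, testUnion cyl U n) := by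
    have hlim := tendsto_measure_iInter_atTop (μ := P) (s := fun n => testUnion cyl U n)
      (fun n => by
        simp only [U, testUnion_tailTest]
        exact (MeasurableSet.iUnion fun j => measurableSet_cylUnion _).nullMeasurableSet)
      (antitone_nat_of_succ_le htest.2.1) ⟨0, measure_ne_top _ _⟩
    refine ge_of_tendsto' hlim fun n => ?_
    simp only [U, testUnion_tailTest]
    refine le_trans ?_ (measure_mono (subset_iUnion _ 0))
    rw [← ENNReal.toReal_le_toReal (by simp [hD0]) (measure_ne_top _ _)]
    rw [ENNReal.toReal_inv, ENNReal.toReal_natCast, ← one_div, div_le_iff₀ hDpos]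
    exact (hVs _).2
  obtain ⟨ω, hωU, hωP⟩ : ∃ ω ∈ ⋂ n, testUnion cyl U n, Random1 P ω := by
    by_contra! hno
    have : P (⋂ n, testUnion cyl U n) = 0 :=
      measure_mono_null (fun ω hω => hno ω hω) (ae_iff.1 (ae_mlRandom P))
    rw [this] at hpos
    simp at hpos
  exact hsub hωP U htest hωU

end AlgRand
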